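/- The space of torsion tensors on ℝ⁴ satisfying W_i = 0 for all i = 0,1,2,3 equals the internal direct sum 𝒜 ⊕ C₋. -/

import Mathlib

/-!
For a torsion tensor `T` and a direct ordering `(i,j,k,l)`, summing `Z` over the cyclic
permutations of `(j,k,l)` gives `W_i = 2 c(T)(e_i) + 𝔟(T)(e_j,e_k,e_l)` (`Wc_eq`). Hence
`𝒜 ⊆ {W = 0}`. For the tensor `T_ν ∈ C₋` attached to `ν`, `c(T_ν) = 3 ν` (`cminus_trace`) and
`𝔟(T_ν) = -6 vol(ν♯,·,·,·)` (`cminus_bianchi`), so the two contributions to `W` cancel and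
`C₋ ⊆ {W = 0}`; moreover `T_ν ∈ ker c` forces `ν = 0`, which makes the sum direct.

Conversely, if `W(T) = 0`, take `ν = c(T) / 3`. Then `T - T_ν` is trace-free and still satisfies
`W = 0`, so its Bianchi image vanishes on the triples `(e_j,e_k,e_l)`; as `𝔟` of a torsion
tensor is totally antisymmetric, it vanishes identically (`bianchi_of_trace`), and `T - T_ν ∈ 𝒜`.
-/

noncomputable section

set_option maxSynthPendingDepth 3

/-- Euclidean `n`-space `ℝⁿ`. -/
abbrev V (n : ℕ) := Fin n → ℝ

/-- Trilinear forms on `ℝⁿ`. -/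
abbrev Tri (n : ℕ) := V n →ₗ[ℝ] V n →ₗ[ℝ] V n →ₗ[ℝ] ℝ

/-- The standard inner product on `ℝⁿ`. -/
def inn {n : ℕ} (X Y : V n) : ℝ := ∑ i, X i * Y i

/-- The standard orthonormal basis of `ℝⁿ`. -/
def stdB {n : ℕ} (i : Fin n) : V n := Pi.single i 1

/-- Torsion tensors: trilinear forms antisymmetric in the first two arguments. -/
def Torsion (n : ℕ) : Submodule ℝ (Tri n) where
  carrier := {T | ∀ X Y Z, T X Y Z = - T Y X Z}
  zero_mem' := by intro X Y Z; simp
  add_mem' := by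
    intro T S hT hS X Y Z
    simp only [LinearMap.add_apply]
    linear_combination hT X Y Z + hS X Y Z
  smul_mem' := by
    intro c T hT X Y Z
    simp only [LinearMap.smul_apply, smul_eq_mul]
    linear_combination c * hT X Y Z

/-- The kernel of the Bianchi map `𝔟(T)(X,Y,Z) = T(X,Y,Z) + T(Y,Z,X) + T(Z,X,Y)`. -/
def kerBianchi (n : ℕ) : Submodule ℝ (Tri n) where
  carrier := {T | ∀ X Y Z, T X Y Z + T Y Z X + T Z X Y = 0}
  zero_mem' := by intro X Y Z; simp
  add_mem' := by
    intro T S hT hS X Y Z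
    simp only [LinearMap.add_apply]
    linear_combination hT X Y Z + hS X Y Z
  smul_mem' := by
    intro c T hT X Y Z
    simp only [LinearMap.smul_apply, smul_eq_mul]
    linear_combination c * hT X Y Z

/-- The kernel of the trace map `c(T)(X) = Σⱼ T(X,eⱼ,eⱼ)`. -/
def kerTrace (n : ℕ) : Submodule ℝ (Tri n) where
  carrier := {T | ∀ X, ∑ j, T X (stdB j) (stdB j) = 0}
  zero_mem' := by intro X; simp
  add_mem' := by
    intro T S hT hS X
    simp only [LinearMap.add_apply, Finset.sum_add_distrib]
    rw [hT X, hS X]; ring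
  smul_mem' := by
    intro c T hT X
    simp only [LinearMap.smul_apply, smul_eq_mul, ← Finset.mul_sum]
    rw [hT X, mul_zero]
/-- The Cartan component `𝒜 = ker 𝔟 ∩ ker c` (inside the torsion tensors). -/
def CartanA (n : ℕ) : Submodule ℝ (Tri n) := Torsion n ⊓ kerBianchi n ⊓ kerTrace n

/-- `(i,j,k,l)` is a direct ordering when it is an even permutation of `(0,1,2,3)`. -/
def DirectOrdering (i j k l : Fin 4) : Prop :=
  ∃ σ : Equiv.Perm (Fin 4), Equiv.Perm.sign σ = 1 ∧ σ 0 = i ∧ σ 1 = j ∧ σ 2 = k ∧ σ 3 = l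

instance (i j k l : Fin 4) : Decidable (DirectOrdering i j k l) :=
  inferInstanceAs (Decidable (∃ σ : Equiv.Perm (Fin 4),
    Equiv.Perm.sign σ = 1 ∧ σ 0 = i ∧ σ 1 = j ∧ σ 2 = k ∧ σ 3 = l))

/-- `Z_{ijk} = T_{ijj} + T_{ikk} + T_{jkl}` for a direct ordering `(i,j,k,l)`. -/
def Zc (T : Tri 4) (i j k l : Fin 4) : ℝ :=
  T (stdB i) (stdB j) (stdB j) + T (stdB i) (stdB k) (stdB k) + T (stdB j) (stdB k) (stdB l)

/-- `W_i`: the sum of `Z_{ijk}` over the three direct orderings `(i,j,k,l)` with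
first entry `i`. -/
def Wc (T : Tri 4) (i : Fin 4) : ℝ :=
  ∑ j : Fin 4, ∑ k : Fin 4, ∑ l : Fin 4,
    if DirectOrdering i j k l then Zc T i j k l else 0

lemma Zc_add (T S : Tri 4) (i j k l : Fin 4) :
    Zc (T + S) i j k l = Zc T i j k l + Zc S i j k l := by
  simp only [Zc, LinearMap.add_apply]; ring

lemma Zc_smul (c : ℝ) (T : Tri 4) (i j k l : Fin 4) :
    Zc (c • T) i j k l = c * Zc T i j k l := by
  simp only [Zc, LinearMap.smul_apply, smul_eq_mul]; ring

lemma Wc_add (T S : Tri 4) (i : Fin 4) : Wc (T + S) i = Wc T i + Wc S i := by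
  simp only [Wc, ← Finset.sum_add_distrib]
  refine Finset.sum_congr rfl fun j _ => Finset.sum_congr rfl fun k _ =>
    Finset.sum_congr rfl fun l _ => ?_
  split_ifs with h
  · exact Zc_add T S i j k l
  · simp

lemma Wc_smul (c : ℝ) (T : Tri 4) (i : Fin 4) : Wc (c • T) i = c * Wc T i := by
  simp only [Wc, Finset.mul_sum]
  refine Finset.sum_congr rfl fun j _ => Finset.sum_congr rfl fun k _ =>
    Finset.sum_congr rfl fun l _ => ?_
  split_ifs with h
  · exact Zc_smul c T i j k l
  · simp

lemma Wc_zero (i : Fin 4) : Wc (0 : Tri 4) i = 0 := by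
  simp [Wc, Zc]

/-- The space of torsion tensors satisfying `W_i = 0` for `i = 0,1,2,3`. -/
def WZero : Submodule ℝ (Tri 4) where
  carrier := {T | T ∈ Torsion 4 ∧ ∀ i, Wc T i = 0}
  zero_mem' := ⟨(Torsion 4).zero_mem, fun i => Wc_zero i⟩
  add_mem' := by
    rintro T S ⟨hT, hT'⟩ ⟨hS, hS'⟩
    exact ⟨(Torsion 4).add_mem hT hS, fun i => by rw [Wc_add, hT' i, hS' i, add_zero]⟩
  smul_mem' := by
    rintro c T ⟨hT, hT'⟩
    exact ⟨(Torsion 4).smul_mem c hT, fun i => by rw [Wc_smul, hT' i, mul_zero]⟩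

/-- The volume form of `ℝ⁴`: the determinant with respect to the standard basis. -/
def vol4 (a b c d : V 4) : ℝ := Matrix.det (Matrix.of ![a, b, c, d])

/-- The vector dual to a linear functional `ν` under the standard inner product. -/
def sharp (ν : V 4 →ₗ[ℝ] ℝ) : V 4 := fun i => ν (stdB i)

lemma sharp_add (ν ρ : V 4 →ₗ[ℝ] ℝ) : sharp (ν + ρ) = sharp ν + sharp ρ := by
  funext i; simp [sharp]

lemma sharp_smul (c : ℝ) (ν : V 4 →ₗ[ℝ] ℝ) : sharp (c • ν) = c • sharp ν := by
  funext i; simp [sharp]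

lemma vol4_add_left (a b x y z : V 4) :
    vol4 (a + b) x y z = vol4 a x y z + vol4 b x y z := by
  simp [vol4, Matrix.det_succ_row_zero, Fin.sum_univ_succ, Pi.add_apply]
  ring

lemma vol4_smul_left (c : ℝ) (a x y z : V 4) :
    vol4 (c • a) x y z = c * vol4 a x y z := by
  simp [vol4, Matrix.det_succ_row_zero, Fin.sum_univ_succ, Pi.smul_apply, smul_eq_mul]
  ring

lemma vol4_zero_left (x y z : V 4) : vol4 0 x y z = 0 := by
  simp [vol4, Matrix.det_succ_row_zero, Fin.sum_univ_succ]

/-- `C₋`: tensors `T(X,Y,Z) = ν(X)⟨Y,Z⟩ − ν(Y)⟨X,Z⟩ − 2 vol(ν♯,X,Y,Z)`. -/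
def Cminus : Submodule ℝ (Tri 4) where
  carrier := {T | ∃ ν : V 4 →ₗ[ℝ] ℝ, ∀ X Y Z,
      T X Y Z = ν X * inn Y Z - ν Y * inn X Z - 2 * vol4 (sharp ν) X Y Z}
  zero_mem' := ⟨0, by
    intro X Y Z
    have h : sharp (0 : V 4 →ₗ[ℝ] ℝ) = 0 := by funext i; simp [sharp]
    simp [h, vol4_zero_left]⟩
  add_mem' := by
    rintro T S ⟨ν, hν⟩ ⟨ρ, hρ⟩
    refine ⟨ν + ρ, fun X Y Z => ?_⟩
    simp only [LinearMap.add_apply, sharp_add, vol4_add_left]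
    linear_combination hν X Y Z + hρ X Y Z
  smul_mem' := by
    rintro c T ⟨ν, hν⟩
    refine ⟨c • ν, fun X Y Z => ?_⟩
    simp only [LinearMap.smul_apply, smul_eq_mul, sharp_smul, vol4_smul_left]
    linear_combination c * hν X Y Z

/-- The Leibniz expansion of the determinant. -/
lemma vol4_eq (a b c d : V 4) :
    vol4 a b c d =
      a 0 * b 1 * c 2 * d 3 - a 0 * b 1 * c 3 * d 2 - a 0 * b 2 * c 1 * d 3
        + a 0 * b 2 * c 3 * d 1 + a 0 * b 3 * c 1 * d 2 - a 0 * b 3 * c 2 * d 1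
        - a 1 * b 0 * c 2 * d 3 + a 1 * b 0 * c 3 * d 2 + a 1 * b 2 * c 0 * d 3
        - a 1 * b 2 * c 3 * d 0 - a 1 * b 3 * c 0 * d 2 + a 1 * b 3 * c 2 * d 0
        + a 2 * b 0 * c 1 * d 3 - a 2 * b 0 * c 3 * d 1 - a 2 * b 1 * c 0 * d 3
        + a 2 * b 1 * c 3 * d 0 + a 2 * b 3 * c 0 * d 1 - a 2 * b 3 * c 1 * d 0
        - a 3 * b 0 * c 1 * d 2 + a 3 * b 0 * c 2 * d 1 + a 3 * b 1 * c 0 * d 2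
        - a 3 * b 1 * c 2 * d 0 - a 3 * b 2 * c 0 * d 1 + a 3 * b 2 * c 1 * d 0 := by
  have h1 : Fin.succAbove (1 : Fin 4) 2 = 3 := by decide
  have h2 : Fin.succAbove (2 : Fin 4) 2 = 3 := by decide
  have h3 : Fin.succAbove (3 : Fin 4) 2 = 2 := by decide
  simp [vol4, Matrix.det_succ_row_zero, Fin.sum_univ_succ, h1, h2, h3]
  ring

/-- The trace `c(T)` as a linear functional. -/
def traceForm (T : Tri 4) : V 4 →ₗ[ℝ] ℝ where
  toFun X := ∑ j, T X (stdB j) (stdB j)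
  map_add' X Y := by simp [Finset.sum_add_distrib]
  map_smul' c X := by simp [Finset.mul_sum]

/-- The element of `C₋` attached to the linear functional `ν`. -/
def cminusTensor (ν : V 4 →ₗ[ℝ] ℝ) : Tri 4 :=
  LinearMap.mk₂ ℝ
    (fun X Y =>
      { toFun := fun Z => ν X * inn Y Z - ν Y * inn X Z - 2 * vol4 (sharp ν) X Y Z
        map_add' := by
          intro Z Z'
          simp [inn, vol4_eq, Fin.sum_univ_succ]
          ring
        map_smul' := by
          intro c Z
          simp [inn, vol4_eq, Fin.sum_univ_succ]
          ring })
    (by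
      intro X X' Y
      refine LinearMap.ext fun Z => ?_
      simp [inn, vol4_eq, Fin.sum_univ_succ]
      ring)
    (by
      intro c X Y
      refine LinearMap.ext fun Z => ?_
      simp [inn, vol4_eq, Fin.sum_univ_succ]
      ring)
    (by
      intro X Y Y'
      refine LinearMap.ext fun Z => ?_
      simp [inn, vol4_eq, Fin.sum_univ_succ]
      ring)
    (by
      intro c X Y
      refine LinearMap.ext fun Z => ?_
      simp [inn, vol4_eq, Fin.sum_univ_succ]
      ring)

lemma cminusTensor_apply (ν : V 4 →ₗ[ℝ] ℝ) (X Y Z : V 4) :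
    cminusTensor ν X Y Z = ν X * inn Y Z - ν Y * inn X Z - 2 * vol4 (sharp ν) X Y Z := rfl

lemma cminusTensor_mem (ν : V 4 →ₗ[ℝ] ℝ) : cminusTensor ν ∈ Cminus :=
  ⟨ν, fun _ _ _ => rfl⟩

lemma eq_cminusTensor {T : Tri 4} (hT : T ∈ Cminus) : ∃ ν, T = cminusTensor ν := by
  obtain ⟨ν, hν⟩ := hT
  exact ⟨ν, LinearMap.ext fun X => LinearMap.ext fun Y => LinearMap.ext fun Z => hν X Y Z⟩

lemma functional_eq (ν : V 4 →ₗ[ℝ] ℝ) (X : V 4) : ν X = ∑ i, X i * ν (stdB i) := by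
  conv_lhs => rw [pi_eq_sum_univ' X]
  simp only [map_sum, map_smul, smul_eq_mul]
  refine Finset.sum_congr rfl fun i _ => ?_
  congr 2

lemma cminus_trace (ν : V 4 →ₗ[ℝ] ℝ) (X : V 4) :
    ∑ j, cminusTensor ν X (stdB j) (stdB j) = 3 * ν X := by
  rw [functional_eq ν X]
  simp only [cminusTensor_apply, functional_eq ν X, Fin.sum_univ_four]
  simp [inn, vol4_eq, stdB, Pi.single_apply]
  ring

lemma cminus_torsion (ν : V 4 →ₗ[ℝ] ℝ) : cminusTensor ν ∈ Torsion 4 := by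
  intro X Y Z
  simp [cminusTensor_apply, inn, vol4_eq, Fin.sum_univ_succ]
  ring

lemma cminus_bianchi (ν : V 4 →ₗ[ℝ] ℝ) (X Y Z : V 4) :
    cminusTensor ν X Y Z + cminusTensor ν Y Z X + cminusTensor ν Z X Y
      = -6 * vol4 (sharp ν) X Y Z := by
  simp [cminusTensor_apply, inn, vol4_eq, Fin.sum_univ_succ]
  ring

/-- `W_i = 2 c(T)(e_i) + 𝔟(T)(e_j,e_k,e_l)`. The direct orderings starting with `i` are the cyclic
permutations of `(j,k,l)` in a single one; the list contains one representative for each `i`. -/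
lemma Wc_eq {T : Tri 4} (hT : T ∈ Torsion 4) :
    ∀ p ∈ [((0 : Fin 4), (1 : Fin 4), (2 : Fin 4), (3 : Fin 4)), (1, 0, 3, 2), (2, 0, 1, 3),
        (3, 0, 2, 1)],
      Wc T p.1 = 2 * ∑ j, T (stdB p.1) (stdB j) (stdB j)
        + (T (stdB p.2.1) (stdB p.2.2.1) (stdB p.2.2.2)
          + T (stdB p.2.2.1) (stdB p.2.2.2) (stdB p.2.1)
          + T (stdB p.2.2.2) (stdB p.2.1) (stdB p.2.2.1)) := by
  have hd : ∀ i j k l : Fin 4, DirectOrdering i j k l ↔ (i, j, k, l) ∈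
      [((0 : Fin 4), (1 : Fin 4), (2 : Fin 4), (3 : Fin 4)), (0, 2, 3, 1), (0, 3, 1, 2),
        (1, 0, 3, 2), (1, 3, 2, 0), (1, 2, 0, 3), (2, 0, 1, 3), (2, 1, 3, 0), (2, 3, 0, 1),
        (3, 0, 2, 1), (3, 2, 1, 0), (3, 1, 0, 2)] := by
    decide +kernel
  have hz : ∀ i, T (stdB i) (stdB i) (stdB i) = 0 := fun i => by
    linarith [hT (stdB i) (stdB i) (stdB i)]
  have h0 := hz 0
  have h1 := hz 1
  have h2 := hz 2
  have h3 := hz 3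
  simp only [List.forall_mem_cons, List.not_mem_nil, false_imp_iff, implies_true, and_true]
  refine ⟨?_, ?_, ?_, ?_⟩ <;>
  · simp [Wc, hd, Zc, Fin.sum_univ_four, h0, h1, h2, h3]
    ring

lemma bianchi_of_trace {T : Tri 4} (hT : T ∈ WZero) (hc : T ∈ kerTrace 4) :
    T ∈ kerBianchi 4 := by
  obtain ⟨ht, hW⟩ := hT
  have key := Wc_eq ht
  simp only [hW, hc (stdB _)] at key
  simp only [List.forall_mem_cons, List.not_mem_nil, false_imp_iff, implies_true, and_true] at key
  obtain ⟨k0, k1, k2, k3⟩ := key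
  have hb : ∀ i j k : Fin 4, T (stdB i) (stdB j) (stdB k) + T (stdB j) (stdB k) (stdB i)
      + T (stdB k) (stdB i) (stdB j) = 0 := by
    have ha : ∀ i j k : Fin 4, T (stdB i) (stdB j) (stdB k) = - T (stdB j) (stdB i) (stdB k) :=
      fun i j k => ht _ _ _
    intro i j k
    have a1 := ha i j k
    have a2 := ha j k i
    have a3 := ha k i j
    fin_cases i <;> fin_cases j <;> fin_cases k <;> simp at a1 a2 a3 ⊢ <;> linarith
  -- The Bianchi sum is invariant under cyclic rotation, so it can be extended from basis
  -- vectors to arbitrary ones in the last slot, three times over.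
  have ext_last : ∀ X Y : V 4,
      (∀ k, T X Y (stdB k) + T Y (stdB k) X + T (stdB k) X Y = 0) →
      ∀ Z, T X Y Z + T Y Z X + T Z X Y = 0 := by
    intro X Y h Z
    have e := functional_eq (T X Y + (T Y).flip X + (T.flip X).flip Y) Z
    simpa [h] using e
  have b1 : ∀ (i j : Fin 4) (Z : V 4), T (stdB i) (stdB j) Z + T (stdB j) Z (stdB i)
      + T Z (stdB i) (stdB j) = 0 := fun i j => ext_last _ _ (hb i j)
  have b2 : ∀ (i : Fin 4) (Y Z : V 4), T (stdB i) Y Z + T Y Z (stdB i) + T Z (stdB i) Y = 0 := by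
    intro i Y Z
    linarith [ext_last Z (stdB i) (fun j => by linarith [b1 i j Z]) Y]
  intro X Y Z
  linarith [ext_last Y Z (fun i => by linarith [b2 i Y Z]) X]

/-- the space of torsion tensors on `ℝ⁴` satisfying `W_i = 0` for all
`i` equals the internal direct sum `𝒜 ⊕ C₋`. -/
theorem wzero_eq_cartanA_sup_cminus :
    WZero = CartanA 4 ⊔ Cminus ∧ CartanA 4 ⊓ Cminus = ⊥ := by
  have hA : CartanA 4 ≤ WZero := by
    rintro T ⟨⟨ht, hb⟩, hc⟩
    have key := Wc_eq ht
    simp only [hc (stdB _), hb (stdB _) (stdB _) (stdB _)] at key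
    refine ⟨ht, fun i => ?_⟩
    simp only [List.forall_mem_cons, List.not_mem_nil, false_imp_iff, implies_true, and_true,
      mul_zero, add_zero] at key
    obtain ⟨k0, k1, k2, k3⟩ := key
    match i with
    | 0 => exact k0
    | 1 => exact k1
    | 2 => exact k2
    | 3 => exact k3
  have hC : Cminus ≤ WZero := by
    intro T hT
    obtain ⟨ν, rfl⟩ := eq_cminusTensor hT
    have key := Wc_eq (cminus_torsion ν)
    simp only [cminus_trace, cminus_bianchi] at key
    refine ⟨cminus_torsion ν, fun i => ?_⟩
    simp only [List.forall_mem_cons, List.not_mem_nil, false_imp_iff, implies_true,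
      and_true] at key
    simp [vol4_eq, stdB, sharp] at key
    obtain ⟨k0, k1, k2, k3⟩ := key
    match i with
    | 0 => linarith
    | 1 => linarith
    | 2 => linarith
    | 3 => linarith
  refine ⟨le_antisymm ?_ (sup_le hA hC), ?_⟩
  · intro T hT
    set S := cminusTensor ((1 / 3 : ℝ) • traceForm T) with hS
    have hSC : S ∈ Cminus := cminusTensor_mem _
    have hD : T - S ∈ WZero := sub_mem hT (hC hSC)
    have hDc : T - S ∈ kerTrace 4 := by
      intro X
      simp only [LinearMap.sub_apply, Finset.sum_sub_distrib, hS, cminus_trace]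
      simp [traceForm]
    rw [← sub_add_cancel T S]
    exact Submodule.add_mem_sup ⟨⟨hD.1, bianchi_of_trace hD hDc⟩, hDc⟩ hSC
  · rw [eq_bot_iff]
    rintro T ⟨⟨_, hc⟩, hT⟩
    obtain ⟨ν, rfl⟩ := eq_cminusTensor hT
    have hν : ν = 0 := by
      refine LinearMap.ext fun X => ?_
      have := hc X
      rw [cminus_trace] at this
      simpa using this
    subst hν
    rw [Submodule.mem_bot]
    refine LinearMap.ext fun X => LinearMap.ext fun Y => LinearMap.ext fun Z => ?_
    have h : sharp (0 : V 4 →ₗ[ℝ] ℝ) = 0 := by funext i; simp [sharp]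
    simp [cminusTensor_apply, h, vol4_zero_left]
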